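/- Let (q_n)_{n≥2} be nonnegative reals with q_n = 0 whenever n is even, ∑_{n≥2} q_n = 1, and ∑_{n≥2} n²·q_n < ∞, and define f(t) = ∑_{n≥2} q_n·f_n(t) for t ∈ [0,1]. Then f is strictly increasing on [0,1], admits a unique fixed point α in (0,1), α < 1/2, and for every x_0 ∈ (0,1) the sequence of iterates u_0 = x_0, u_{m+1} = f(u_m) converges to α. -/

import Mathlib

open Real Filter Finset

/-- `f n t = ∑_{k, 0 ≤ 2k ≤ n} C(n,2k)·C(2k,k)·((1−t)/2)^{2k}·t^{n−2k}` -/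
noncomputable def f (n : ℕ) (t : ℝ) : ℝ :=
  ∑ k ∈ Finset.range (n / 2 + 1),
    (n.choose (2 * k) : ℝ) * ((2 * k).choose k : ℝ) * ((1 - t) / 2) ^ (2 * k) * t ^ (n - 2 * k)

lemma aux_sum_even_odd (a : ℕ → ℝ) (N : ℕ) :
    ∑ i ∈ Finset.range (2 * N), a i = ∑ k ∈ Finset.range N, (a (2 * k) + a (2 * k + 1)) := by
  induction N with
  | zero => simp
  | succ N ih =>
    rw [Finset.sum_range_succ, ← ih, show 2 * (N + 1) = 2 * N + 1 + 1 by ring,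
      Finset.sum_range_succ, Finset.sum_range_succ]
    ring

lemma aux_half_sum (A B : ℝ) (m : ℕ) :
    ((A + B) ^ (2 * m + 1) + (A - B) ^ (2 * m + 1)) / 2 =
      ∑ k ∈ Finset.range (m + 1),
        ((2 * m + 1).choose (2 * k) : ℝ) * B ^ (2 * k) * A ^ (2 * m + 1 - 2 * k) := by
  rw [add_comm A B, show A - B = -B + A by ring, add_pow, add_pow,
    show 2 * m + 1 + 1 = 2 * (m + 1) by ring, aux_sum_even_odd, aux_sum_even_odd,
    ← Finset.sum_add_distrib, Finset.sum_div]
  refine Finset.sum_congr rfl fun k _ => ?_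
  have h1 : (-B) ^ (2 * k) = B ^ (2 * k) := by rw [pow_mul, pow_mul, neg_sq]
  have h2 : (-B) ^ (2 * k + 1) = - B ^ (2 * k + 1) := by rw [pow_succ, h1, pow_succ]; ring
  rw [h1, h2]
  ring

lemma aux_int_sin (k : ℕ) :
    ∫ θ in (0:ℝ)..π, sin θ ^ (2 * k) = π * (((2 * k).choose k : ℝ) / 4 ^ k) := by
  rw [integral_sin_pow_even]
  congr 1
  induction k with
  | zero => simp
  | succ k ih =>
    rw [Finset.prod_range_succ, ih]
    have h := Nat.succ_mul_centralBinom_succ k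
    rw [Nat.centralBinom_eq_two_mul_choose, Nat.centralBinom_eq_two_mul_choose] at h
    have h' : ((k : ℝ) + 1) * ((2 * (k + 1)).choose (k + 1) : ℝ)
        = 2 * (2 * k + 1) * ((2 * k).choose k : ℝ) := by exact_mod_cast h
    have hk : (k : ℝ) + 1 ≠ 0 := by positivity
    rw [pow_succ]
    field_simp
    linear_combination (-2) * h'

lemma aux_f_rep (m : ℕ) (t : ℝ) :
    π * f (2 * m + 1) t = ∫ θ in (0:ℝ)..π,
      ((t + (1 - t) * sin θ) ^ (2 * m + 1) + (t - (1 - t) * sin θ) ^ (2 * m + 1)) / 2 := by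
  simp_rw [aux_half_sum]
  rw [intervalIntegral.integral_finsetSum]
  · unfold f
    rw [show (2 * m + 1) / 2 + 1 = m + 1 by omega, Finset.mul_sum]
    refine Finset.sum_congr rfl fun k _ => ?_
    have : ∀ θ : ℝ, ((2 * m + 1).choose (2 * k) : ℝ) * ((1 - t) * sin θ) ^ (2 * k)
        * t ^ (2 * m + 1 - 2 * k) = (((2 * m + 1).choose (2 * k) : ℝ) * (1 - t) ^ (2 * k)
        * t ^ (2 * m + 1 - 2 * k)) * sin θ ^ (2 * k) := by intro θ; rw [mul_pow]; ring
    simp_rw [this]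
    rw [intervalIntegral.integral_const_mul, aux_int_sin, div_pow, pow_mul (2:ℝ) 2 k]
    norm_num
    ring
  · intro i _
    apply Continuous.intervalIntegrable
    fun_prop

lemma aux_strict (m : ℕ) : StrictMonoOn (f (2 * m + 1)) (Set.Icc 0 1) := by
  intro x hx y hy hxy
  have hodd : Odd (2 * m + 1) := ⟨m, rfl⟩
  have key : π * f (2 * m + 1) x < π * f (2 * m + 1) y := by
    rw [aux_f_rep, aux_f_rep]
    have hlt : ∀ s : ℝ, 0 ≤ s → s ≤ 1 →
      ((x + (1 - x) * s) ^ (2 * m + 1) + (x - (1 - x) * s) ^ (2 * m + 1)) / 2 <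
      ((y + (1 - y) * s) ^ (2 * m + 1) + (y - (1 - y) * s) ^ (2 * m + 1)) / 2 := by
      intro s h0 h1
      have e1 : (x + (1 - x) * s) ^ (2 * m + 1) ≤ (y + (1 - y) * s) ^ (2 * m + 1) :=
        hodd.strictMono_pow.monotone (by nlinarith)
      have e2 : (x - (1 - x) * s) ^ (2 * m + 1) < (y - (1 - y) * s) ^ (2 * m + 1) :=
        hodd.strictMono_pow (by nlinarith)
      linarith
    refine intervalIntegral.integral_lt_integral_of_continuousOn_of_le_of_exists_lt pi_pos
      (by fun_prop) (by fun_prop) ?_ ⟨0, ⟨le_rfl, pi_pos.le⟩, ?_⟩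
    · intro θ hθ
      exact (hlt _ (sin_nonneg_of_mem_Icc ⟨hθ.1.le, hθ.2⟩) (sin_le_one θ)).le
    · exact hlt _ (by simp) (sin_le_one 0)
  exact lt_of_mul_lt_mul_left key pi_pos.le

lemma aux_zero (m : ℕ) : f (2 * m + 1) 0 = 0 := by
  unfold f
  refine Finset.sum_eq_zero fun k hk => ?_
  rw [Finset.mem_range] at hk
  rw [zero_pow (by omega), mul_zero]

lemma aux_one (n : ℕ) : f n 1 = 1 := by
  unfold f
  rw [Finset.sum_range_succ', Finset.sum_eq_zero]
  · simp
  · intro k _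
    simp

lemma aux_half (m : ℕ) (hm : 1 ≤ m) : f (2 * m + 1) (1 / 2) < 1 / 2 := by
  have key : π * f (2 * m + 1) (1 / 2) < π * (1 / 2) := by
    rw [aux_f_rep]
    have : π * (1 / 2) = ∫ θ in (0:ℝ)..π, (1 / 2 : ℝ) := by simp
    rw [this]
    have hle : ∀ z : ℝ, 0 ≤ z → z ≤ 1 → z ^ (2 * m + 1) ≤ z := fun z h0 h1 =>
      pow_le_of_le_one h0 h1 (by omega)
    refine intervalIntegral.integral_lt_integral_of_continuousOn_of_le_of_exists_lt pi_pos
      (by fun_prop) (by fun_prop) ?_ ⟨0, ⟨le_rfl, pi_pos.le⟩, ?_⟩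
    · intro θ hθ
      have h0 := sin_nonneg_of_mem_Icc ⟨hθ.1.le, hθ.2⟩
      have h1 := sin_le_one θ
      have e1 := hle (1 / 2 + (1 - 1 / 2) * sin θ) (by linarith) (by linarith)
      have e2 := hle (1 / 2 - (1 - 1 / 2) * sin θ) (by linarith) (by linarith)
      linarith
    · have : (1 / 2 : ℝ) ^ (2 * m + 1) < 1 / 2 :=
        pow_lt_self_of_lt_one₀ (by norm_num) (by norm_num) (by omega)
      simp only [sin_zero, mul_zero, add_zero, sub_zero]
      linarith
  exact lt_of_mul_lt_mul_left key pi_pos.le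

/-- integral formula giving convexity of the quotient -/
lemma aux_quot (m : ℕ) (t B : ℝ) (ht : 0 < t) :
    ((t + B) ^ (2 * m + 1) + (t - B) ^ (2 * m + 1)) / t =
      ∫ w in (-1:ℝ)..1, (2 * m + 1) * (w * t + B) ^ (2 * m) := by
  have hd : ∀ w ∈ Set.uIcc (-1:ℝ) 1, HasDerivAt (fun w : ℝ => (w * t + B) ^ (2 * m + 1) / t)
      ((2 * m + 1) * (w * t + B) ^ (2 * m)) w := by
    intro w _
    have h := ((((hasDerivAt_id w).mul_const t).add_const B).pow (2 * m + 1)).div_const t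
    refine h.congr_deriv ?_
    simp
    field_simp
  rw [intervalIntegral.integral_eq_sub_of_hasDerivAt hd
    (Continuous.intervalIntegrable (by fun_prop) _ _)]
  have : (-1 * t + B) ^ (2 * m + 1) = - (t - B) ^ (2 * m + 1) := by
    rw [← Odd.neg_pow ⟨m, rfl⟩]; congr 1; ring
  rw [this]
  ring

lemma aux_convex (m : ℕ) {x y a b : ℝ} (hx : 0 < x) (hy : 0 < y) (ha : 0 ≤ a) (hb : 0 ≤ b)
    (hab : a + b = 1) (hz : 0 < a * x + b * y) :
    f (2 * m + 1) (a * x + b * y) / (a * x + b * y) ≤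
      a * (f (2 * m + 1) x / x) + b * (f (2 * m + 1) y / y) := by
  have hc : ConvexOn ℝ Set.univ (fun z : ℝ => z ^ (2 * m)) := (even_two_mul m).convexOn_pow
  have step : ∀ s : ℝ,
      ((a * x + b * y + (1 - (a * x + b * y)) * s) ^ (2 * m + 1)
        + (a * x + b * y - (1 - (a * x + b * y)) * s) ^ (2 * m + 1)) / (a * x + b * y) ≤
      a * (((x + (1 - x) * s) ^ (2 * m + 1) + (x - (1 - x) * s) ^ (2 * m + 1)) / x) +
      b * (((y + (1 - y) * s) ^ (2 * m + 1) + (y - (1 - y) * s) ^ (2 * m + 1)) / y) := by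
    intro s
    rw [aux_quot m _ _ hz, aux_quot m _ _ hx, aux_quot m _ _ hy,
      ← intervalIntegral.integral_const_mul, ← intervalIntegral.integral_const_mul,
      ← intervalIntegral.integral_add (Continuous.intervalIntegrable (by fun_prop) _ _)
        (Continuous.intervalIntegrable (by fun_prop) _ _)]
    refine intervalIntegral.integral_mono_on (by norm_num)
      (Continuous.intervalIntegrable (by fun_prop) _ _)
      (Continuous.intervalIntegrable (by fun_prop) _ _) fun w _ => ?_
    have h := hc.2 (Set.mem_univ (w * x + (1 - x) * s)) (Set.mem_univ (w * y + (1 - y) * s))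
      ha hb hab
    simp only [smul_eq_mul] at h
    have e : w * (a * x + b * y) + (1 - (a * x + b * y)) * s =
      a * (w * x + (1 - x) * s) + b * (w * y + (1 - y) * s) := by
      linear_combination (-s) * hab
    rw [e]
    have h2 := mul_le_mul_of_nonneg_left h (show (0:ℝ) ≤ 2 * m + 1 by positivity)
    linarith
  have rep : ∀ t : ℝ, π * (f (2 * m + 1) t / t) = ∫ θ in (0:ℝ)..π,
      (((t + (1 - t) * sin θ) ^ (2 * m + 1) + (t - (1 - t) * sin θ) ^ (2 * m + 1)) / t) / 2 := by
    intro t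
    rw [← mul_div_assoc, aux_f_rep, ← intervalIntegral.integral_div]
    congr 1
    ext θ
    ring
  refine le_of_mul_le_mul_left ?_ pi_pos
  rw [mul_add, mul_left_comm π a, mul_left_comm π b, rep, rep, rep,
      ← intervalIntegral.integral_const_mul, ← intervalIntegral.integral_const_mul,
      ← intervalIntegral.integral_add (Continuous.intervalIntegrable (by fun_prop) _ _)
        (Continuous.intervalIntegrable (by fun_prop) _ _)]
  refine intervalIntegral.integral_mono_on pi_pos.le
      (Continuous.intervalIntegrable (by fun_prop) _ _)
      (Continuous.intervalIntegrable (by fun_prop) _ _) fun θ _ => ?_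
  have := step (sin θ)
  linarith

/-- `f n t / t` as a polynomial -/
noncomputable def auxH (n : ℕ) (t : ℝ) : ℝ :=
  ∑ k ∈ Finset.range (n / 2 + 1),
    (n.choose (2 * k) : ℝ) * ((2 * k).choose k : ℝ) * ((1 - t) / 2) ^ (2 * k) * t ^ (n - 1 - 2 * k)

lemma auxH_eq (m : ℕ) (t : ℝ) : f (2 * m + 1) t = t * auxH (2 * m + 1) t := by
  unfold f auxH
  rw [Finset.mul_sum]
  refine Finset.sum_congr rfl fun k hk => ?_
  rw [Finset.mem_range] at hk
  rw [show 2 * m + 1 - 2 * k = (2 * m + 1 - 1 - 2 * k) + 1 by omega, pow_succ]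
  ring

lemma auxH_cont (n : ℕ) : Continuous (auxH n) := by
  unfold auxH
  fun_prop

lemma auxH_zero (m : ℕ) (hm : 1 ≤ m) : 3 / 2 ≤ auxH (2 * m + 1) 0 := by
  have e : auxH (2 * m + 1) 0 = (2 * m + 1) * ((2 * m).choose m : ℝ) / 4 ^ m := by
    unfold auxH
    rw [show (2 * m + 1) / 2 + 1 = m + 1 by omega, Finset.sum_range_succ, Finset.sum_eq_zero]
    · simp only [sub_zero, Nat.add_sub_cancel, Nat.sub_self, pow_zero, zero_add, mul_one]
      rw [Nat.choose_succ_self_right, pow_mul, div_pow, div_pow]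
      norm_num
      ring
    · intro k hk
      rw [Finset.mem_range] at hk
      rw [zero_pow (by omega), mul_zero]
  rw [e]
  clear e
  induction m, hm using Nat.le_induction with
  | base => norm_num [Nat.choose]
  | succ k hk ih =>
    refine ih.trans ?_
    have h := Nat.succ_mul_centralBinom_succ k
    rw [Nat.centralBinom_eq_two_mul_choose, Nat.centralBinom_eq_two_mul_choose] at h
    have h' : ((k : ℝ) + 1) * ((2 * (k + 1)).choose (k + 1) : ℝ)
        = 2 * (2 * k + 1) * ((2 * k).choose k : ℝ) := by exact_mod_cast h
    have hk0 : (0:ℝ) < (k : ℝ) + 1 := by positivity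
    have h'' : ((2 * (k + 1)).choose (k + 1) : ℝ)
        = 2 * (2 * k + 1) * ((2 * k).choose k : ℝ) / (k + 1) := by
      field_simp; linarith
    rw [h'', pow_succ]
    push_cast
    have hC : (0:ℝ) ≤ ((2 * k).choose k : ℝ) := by positivity
    have hk1 : (0:ℝ) ≤ k := by positivity
    rw [div_le_div_iff₀ (by positivity) (by positivity), mul_div_assoc', div_mul_eq_mul_div,
      le_div_iff₀ hk0]
    have h4 : (0:ℝ) < 4 ^ k := by positivity
    have : 0 ≤ (2 * (k:ℝ) + 1) * ((2 * k).choose k : ℝ) * 4 ^ k := by positivity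
    nlinarith

theorem stmt_18 (q : ℕ → ℝ) (hq : ∀ n, 0 ≤ q n)
    (hsupp_even : ∀ n, Even n → q n = 0) (hsupp_low : ∀ n < 2, q n = 0)
    (hsum : HasSum q 1)
    (hmoment : Summable fun n : ℕ => (n : ℝ) ^ 2 * q n)
    (g : ℝ → ℝ) (hg : ∀ t, g t = ∑' n : ℕ, q n * f n t) :
    StrictMonoOn g (Set.Icc (0 : ℝ) 1) ∧
    ∃ α : ℝ, α ∈ Set.Ioo (0 : ℝ) 1 ∧ g α = α ∧ α < 1 / 2 ∧
      (∀ t ∈ Set.Ioo (0 : ℝ) 1, g t = t → t = α) ∧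
      ∀ x₀ ∈ Set.Ioo (0 : ℝ) 1,
        Filter.Tendsto (fun m => g^[m] x₀) Filter.atTop (nhds α) := by
  -- either the weight vanishes or the index is odd and at least three
  have hcase : ∀ n, q n = 0 ∨ ∃ m, 1 ≤ m ∧ n = 2 * m + 1 := by
    intro n
    rcases Nat.even_or_odd n with h | ⟨m, h⟩
    · exact Or.inl (hsupp_even n h)
    · rcases Nat.eq_zero_or_pos m with h0 | h0
      · exact Or.inl (hsupp_low n (by omega))
      · exact Or.inr ⟨m, h0, h⟩
  obtain ⟨N, hN⟩ : ∃ N, 0 < q N := by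
    by_contra! hcon
    have h0 : q = fun _ => 0 := funext fun n => le_antisymm (hcon n) (hq n)
    rw [h0] at hsum
    exact zero_ne_one (hasSum_zero.unique hsum)
  have hNm : ∃ m, 1 ≤ m ∧ N = 2 * m + 1 := (hcase N).resolve_left hN.ne'
  have hbd : ∀ t ∈ Set.Icc (0:ℝ) 1, ∀ n, 0 ≤ q n * f n t ∧ q n * f n t ≤ q n := by
    intro t ht n
    rcases hcase n with h | ⟨m, -, rfl⟩
    · simp [h]
    · have h0 : 0 ≤ f (2 * m + 1) t := by
        rw [← aux_zero m]
        exact (aux_strict m).monotoneOn ⟨le_rfl, zero_le_one⟩ ht ht.1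
      have h1 : f (2 * m + 1) t ≤ 1 := by
        rw [← aux_one (2 * m + 1)]
        exact (aux_strict m).monotoneOn ht ⟨zero_le_one, le_rfl⟩ ht.2
      exact ⟨mul_nonneg (hq _) h0, mul_le_of_le_one_right (hq _) h1⟩
  have hsm : ∀ t ∈ Set.Icc (0:ℝ) 1, Summable fun n => q n * f n t := fun t ht =>
    Summable.of_nonneg_of_le (fun n => (hbd t ht n).1) (fun n => (hbd t ht n).2) hsum.summable
  have hmono : StrictMonoOn g (Set.Icc (0 : ℝ) 1) := by
    intro x hx y hy hxy
    rw [hg, hg]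
    refine Summable.tsum_lt_tsum (i := N) ?_ ?_ (hsm x hx) (hsm y hy)
    · intro n
      rcases hcase n with h | ⟨m, -, rfl⟩
      · simp [h]
      · exact mul_le_mul_of_nonneg_left ((aux_strict m hx hy hxy).le) (hq _)
    · obtain ⟨m, -, rfl⟩ := hNm
      exact mul_lt_mul_of_pos_left (aux_strict m hx hy hxy) hN
  have hcont : ContinuousOn g (Set.Icc (0 : ℝ) 1) := by
    have : g = fun t => ∑' n, q n * f n t := funext hg
    rw [this]
    refine continuousOn_tsum (u := q) (fun n => ?_) hsum.summable ?_
    · unfold f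
      fun_prop
    · intro n t ht
      rw [Real.norm_eq_abs, abs_of_nonneg (hbd t ht n).1]
      exact (hbd t ht n).2
  have hg1 : g 1 = 1 := by
    rw [hg]; simp only [aux_one, mul_one]; exact hsum.tsum_eq
  have hghalf : g (1 / 2) < 1 / 2 := by
    have hh : (1 / 2 : ℝ) ∈ Set.Icc (0:ℝ) 1 := ⟨by norm_num, by norm_num⟩
    have e : ∑' n, q n * (1 / 2 : ℝ) = 1 / 2 := by rw [tsum_mul_right, hsum.tsum_eq, one_mul]
    rw [hg, ← e]
    have := Summable.tsum_lt_tsum (i := N) (f := fun n => q n * f n (1 / 2))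
      (g := fun n => q n * (1 / 2)) ?_ ?_ (hsm _ hh) (hsum.summable.mul_right _)
    · simpa only [e] using this
    · intro n
      rcases hcase n with h | ⟨m, hm, rfl⟩
      · simp [h]
      · exact mul_le_mul_of_nonneg_left (aux_half m hm).le (hq _)
    · obtain ⟨m, hm, rfl⟩ := hNm
      exact mul_lt_mul_of_pos_left (aux_half m hm) hN
  -- convexity of g t / t
  have hconv : ∀ x y a b : ℝ, 0 < x → x ≤ 1 → 0 < y → y ≤ 1 → 0 ≤ a → 0 ≤ b → a + b = 1 →
      g (a * x + b * y) / (a * x + b * y) ≤ a * (g x / x) + b * (g y / y) := by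
    intro x y a b hx hx1 hy hy1 ha hb hab
    have hz : 0 < a * x + b * y := by
      rcases ha.eq_or_lt with h | h
      · have : b = 1 := by linarith
        subst this; rw [← h]; linarith
      · have := mul_pos h hx
        have := mul_nonneg hb hy.le
        linarith
    have hz1 : a * x + b * y ≤ 1 := by nlinarith
    have hzI : a * x + b * y ∈ Set.Icc (0:ℝ) 1 := ⟨hz.le, hz1⟩
    have hxI : x ∈ Set.Icc (0:ℝ) 1 := ⟨hx.le, hx1⟩
    have hyI : y ∈ Set.Icc (0:ℝ) 1 := ⟨hy.le, hy1⟩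
    rw [hg, hg, hg, ← tsum_div_const, ← tsum_div_const, ← tsum_div_const, ← tsum_mul_left,
      ← tsum_mul_left, ← Summable.tsum_add (((hsm x hxI).div_const _).mul_left _)
        (((hsm y hyI).div_const _).mul_left _)]
    refine Summable.tsum_le_tsum ?_ ((hsm _ hzI).div_const _)
      ((((hsm x hxI).div_const _).mul_left _).add (((hsm y hyI).div_const _).mul_left _))
    intro n
    rcases hcase n with h | ⟨m, hm, rfl⟩
    · simp [h]
    · have h := mul_le_mul_of_nonneg_left (aux_convex m hx hy ha hb hab hz) (hq (2 * m + 1))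
      calc _ = _ := mul_div_assoc _ _ _
        _ ≤ _ := h
        _ = _ := by ring
  -- near zero g is above the diagonal
  obtain ⟨δ, hδ0, hδ1, hδ⟩ : ∃ δ : ℝ, 0 < δ ∧ δ < 1 / 2 ∧ δ < g δ := by
    obtain ⟨S, hS⟩ : ∃ S : Finset ℕ, 2 / 3 < ∑ n ∈ S, q n :=
      (hsum.eventually (lt_mem_nhds (by norm_num : (2 / 3 : ℝ) < 1))).exists
    have hP : Continuous fun t => ∑ n ∈ S, q n * auxH n t :=
      continuous_finsetSum _ fun n _ => continuous_const.mul (auxH_cont n)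
    have hP0 : 1 < ∑ n ∈ S, q n * auxH n 0 := by
      have : ∑ n ∈ S, q n * (3 / 2) ≤ ∑ n ∈ S, q n * auxH n 0 := by
        refine Finset.sum_le_sum fun n _ => ?_
        rcases hcase n with h | ⟨m, hm, rfl⟩
        · simp [h]
        · exact mul_le_mul_of_nonneg_left (auxH_zero m hm) (hq _)
      rw [← Finset.sum_mul] at this
      linarith
    have hev : ∀ᶠ t in nhdsWithin (0:ℝ) (Set.Ioi 0), 1 < ∑ n ∈ S, q n * auxH n t :=
      (hP.tendsto 0).mono_left nhdsWithin_le_nhds |>.eventually (lt_mem_nhds hP0)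
    have hev2 : ∀ᶠ t in nhdsWithin (0:ℝ) (Set.Ioi 0), t ∈ Set.Ioo (0:ℝ) (1 / 2) :=
      Ioo_mem_nhdsGT (by norm_num)
    obtain ⟨t, ht1, ht2⟩ := (hev.and hev2).exists
    refine ⟨t, ht2.1, ht2.2, ?_⟩
    have htI : t ∈ Set.Icc (0:ℝ) 1 := ⟨ht2.1.le, by linarith [ht2.2]⟩
    have hle : ∑ n ∈ S, q n * f n t ≤ g t := by
      rw [hg]
      exact (hsm t htI).sum_le_tsum S fun n _ => (hbd t htI n).1
    have heq : ∑ n ∈ S, q n * f n t = t * ∑ n ∈ S, q n * auxH n t := by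
      rw [Finset.mul_sum]
      refine Finset.sum_congr rfl fun n _ => ?_
      rcases hcase n with h | ⟨m, hm, rfl⟩
      · simp [h]
      · rw [auxH_eq]; ring
    have := mul_lt_mul_of_pos_left ht1 ht2.1
    linarith
  -- existence of the fixed point
  obtain ⟨α, hαI, hα⟩ : ∃ α ∈ Set.Ioo δ (1 / 2), g α - α = 0 := by
    have hc : ContinuousOn (fun t => g t - t) (Set.Icc δ (1 / 2)) :=
      (hcont.mono (Set.Icc_subset_Icc hδ0.le (by norm_num))).sub continuousOn_id
    exact intermediate_value_Ioo' hδ1.le hc ⟨by linarith, by linarith⟩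
  have hα : g α = α := by linarith
  have hα0 : 0 < α := hδ0.trans hαI.1
  have hαh : α < 1 / 2 := hαI.2
  have hα1 : α < 1 := by linarith
  have hHα : g α / α = 1 := by rw [hα, div_self hα0.ne']
  have hHh : g (1 / 2) / (1 / 2) < 1 := by rw [div_lt_one (by norm_num)]; exact hghalf
  have hH1 : g 1 / 1 = 1 := by rw [hg1, div_one]
  -- strict comparison: if `x < z < y` etc.
  have hcomb : ∀ x y z : ℝ, 0 < x → x < z → z < y → y ≤ 1 → g x / x ≤ 1 → g y / y ≤ 1 →
      (g x / x < 1 ∨ g y / y < 1) → g z / z < 1 := by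
    intro x y z hx hxz hzy hy1 h1 h2 h3
    have hd : 0 < y - x := by linarith
    have ha : 0 < (y - z) / (y - x) := div_pos (by linarith) hd
    have hb : 0 < (z - x) / (y - x) := div_pos (by linarith) hd
    have hab : (y - z) / (y - x) + (z - x) / (y - x) = 1 := by field_simp; ring
    have hz : (y - z) / (y - x) * x + (z - x) / (y - x) * y = z := by field_simp; ring
    have h := hconv x y _ _ hx (by linarith) (by linarith) hy1 ha.le hb.le hab
    rw [hz] at h
    generalize (y - z) / (y - x) = a at *
    generalize (z - x) / (y - x) = b at *
    rcases h3 with h3 | h3 <;> nlinarith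
  have habove : ∀ t, α < t → t < 1 → g t < t := by
    intro t h1 h2
    have ht0 : 0 < t := by linarith
    rw [← div_lt_one ht0]
    rcases lt_trichotomy t (1 / 2) with h | h | h
    · exact hcomb α (1 / 2) t hα0 h1 h (by norm_num) hHα.le hHh.le (Or.inr hHh)
    · rw [h]; exact hHh
    · exact hcomb (1 / 2) 1 t (by norm_num) h h2 le_rfl hHh.le hH1.le (Or.inl hHh)
  have hbelow : ∀ t, 0 < t → t < α → t < g t := by
    intro t h0 h1
    by_contra! hcon
    have := hcomb t (1 / 2) α h0 h1 hαh (by norm_num) ((div_le_one h0).2 hcon) hHh.le (Or.inr hHh)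
    linarith
  have huniq : ∀ t ∈ Set.Ioo (0 : ℝ) 1, g t = t → t = α := by
    intro t ht he
    rcases lt_trichotomy t α with h | h | h
    · have := hbelow t ht.1 h; linarith
    · exact h
    · have := habove t h ht.2; linarith
  refine ⟨hmono, α, ⟨hα0, hα1⟩, hα, hαh, huniq, ?_⟩
  have hαIcc : α ∈ Set.Icc (0:ℝ) 1 := ⟨hα0.le, hα1.le⟩
  have hfix : ∀ x₀ L : ℝ, Tendsto (fun m => g^[m] x₀) atTop (nhds L) → L ∈ Set.Ioo (0:ℝ) 1 →
      L = α := by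
    intro x₀ L hL hLI
    exact huniq L hLI (isFixedPt_of_tendsto_iterate hL
      (hcont.continuousAt (Icc_mem_nhds hLI.1 hLI.2)))
  intro x₀ hx
  rcases le_total x₀ α with hle | hle
  · have hstep : ∀ t, x₀ ≤ t → t ≤ α → t ≤ g t ∧ g t ≤ α := by
      intro t h1 h2
      have ht0 : 0 < t := lt_of_lt_of_le hx.1 h1
      constructor
      · rcases h2.eq_or_lt with h | h
        · rw [h, hα]
        · exact (hbelow t ht0 h).le
      · have := hmono.monotoneOn ⟨ht0.le, by linarith⟩ hαIcc h2
        linarith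
    have hinv : ∀ m, x₀ ≤ g^[m] x₀ ∧ g^[m] x₀ ≤ α := by
      intro m
      induction m with
      | zero => exact ⟨le_rfl, hle⟩
      | succ m ih =>
        rw [Function.iterate_succ_apply']
        have := hstep _ ih.1 ih.2
        exact ⟨ih.1.trans this.1, this.2⟩
    have hM : Monotone fun m => g^[m] x₀ := monotone_nat_of_le_succ fun m => by
      rw [Function.iterate_succ_apply']
      exact (hstep _ (hinv m).1 (hinv m).2).1
    have hT := tendsto_atTop_ciSup hM ⟨α, by rintro _ ⟨m, rfl⟩; exact (hinv m).2⟩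
    have h1 := ge_of_tendsto' hT fun m => (hinv m).1
    have h2 := le_of_tendsto' hT fun m => (hinv m).2
    have := hfix _ _ hT ⟨lt_of_lt_of_le hx.1 h1, lt_of_le_of_lt h2 hα1⟩
    rwa [this] at hT
  · have hstep : ∀ t, t ≤ x₀ → α ≤ t → g t ≤ t ∧ α ≤ g t := by
      intro t h1 h2
      have ht1 : t < 1 := lt_of_le_of_lt h1 hx.2
      constructor
      · rcases h2.eq_or_lt with h | h
        · rw [← h, hα]
        · exact (habove t h ht1).le
      · have := hmono.monotoneOn hαIcc ⟨by linarith, ht1.le⟩ h2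
        linarith
    have hinv : ∀ m, g^[m] x₀ ≤ x₀ ∧ α ≤ g^[m] x₀ := by
      intro m
      induction m with
      | zero => exact ⟨le_rfl, hle⟩
      | succ m ih =>
        rw [Function.iterate_succ_apply']
        have := hstep _ ih.1 ih.2
        exact ⟨this.1.trans ih.1, this.2⟩
    have hM : Antitone fun m => g^[m] x₀ := antitone_nat_of_succ_le fun m => by
      rw [Function.iterate_succ_apply']
      exact (hstep _ (hinv m).1 (hinv m).2).1
    have hT := tendsto_atTop_ciInf hM ⟨α, by rintro _ ⟨m, rfl⟩; exact (hinv m).2⟩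
    have h1 := ge_of_tendsto' hT fun m => (hinv m).2
    have h2 := le_of_tendsto' hT fun m => (hinv m).1
    have := hfix _ _ hT ⟨lt_of_lt_of_le hα0 h1, lt_of_le_of_lt h2 hx.2⟩
    rwa [this] at hT
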